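/- Let H be a real Hilbert space and F ⊆ H a nonempty compact set. Let (f_m)_{m ≥ 0} be a sequence in F, set V_n := span{f_0, …, f_{n−1}} (with V_0 = {0}), define σ_n(F) := sup_{f ∈ F} dist(f, V_n), and let d_n(F) := inf { sup_{f ∈ F} dist(f, Y) : Y is a subspace of H with dim Y ≤ n } be the Kolmogorov n-width. Suppose the sequence is weak greedy with parameter γ ∈ (0, 1], i.e. dist(f_n, V_n) ≥ γ · σ_n(F) for all n, and suppose the n-widths decay exponentially: there exist C₀ > 0 and γ̂ > log(1 + γ^{−1}) such that d_n(F) ≤ C₀ e^{−γ̂ n} for all n ≥ 0. Then there exist constants ζ > 0 and C > 0 such that σ_n(F) ≤ C · C₀ · e^{−ζ n} for all n ≥ 0; in particular, for every f ∈ F, inf_{w ∈ V_n} ‖f − w‖ ≤ C · C₀ · e^{−ζ n}. -/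

import Mathlib

/-- The space spanned by the first `n` greedily selected elements. -/
noncomputable def greedySpace {H : Type*} [NormedAddCommGroup H] [InnerProductSpace ℝ H]
    (f : ℕ → H) (n : ℕ) : Submodule ℝ H :=
  Submodule.span ℝ (f '' Set.Iio n)

/-- The worst-case error `σ_n(F)` of the `n`-th greedy space. -/
noncomputable def greedyError {H : Type*} [NormedAddCommGroup H] [InnerProductSpace ℝ H]
    (F : Set H) (f : ℕ → H) (n : ℕ) : ℝ :=
  ⨆ g : F, Metric.infDist (g : H) (greedySpace f n : Set H)

/-- The Kolmogorov `n`-width `d_n(F)` of a set `F` in `H`. -/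
noncomputable def kolmogorovWidth {H : Type*} [NormedAddCommGroup H] [InnerProductSpace ℝ H]
    (F : Set H) (n : ℕ) : ℝ :=
  sInf { r : ℝ | ∃ Y : Submodule ℝ H, FiniteDimensional ℝ Y ∧ Module.finrank ℝ Y ≤ n ∧
    r = ⨆ g : F, Metric.infDist (g : H) (Y : Set H) }

/-!
Let `g_0, g_1, …` be the Gram–Schmidt residuals of `f`, so that `‖g_i‖ = dist(f_i, V_i) ≥ γ σ_i`.
The Gram–Schmidt coefficient of `f_i` along `g_j` is at most `dist(f_i, V_j) / ‖g_j‖ ≤ γ⁻¹`, so for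
every subspace `Y` from which `F` deviates by `r`,
`dist(g_i, Y) ≤ r + γ⁻¹ ∑_{j < i} dist(g_j, Y)`, and a discrete Grönwall argument gives
`γ⁻¹ ∑_{i ≤ n} dist(g_i, Y) ≤ r ((1 + γ⁻¹)^(n + 1) - 1)`.

If `dim Y ≤ n`, the `n + 1` orthogonal vectors `g_0, …, g_n`, all of norm at least `γ σ_n`, cannot
all be close to `Y`: for orthonormal `e_i` one has `∑ ‖P_Y e_i‖² ≤ dim Y`, whence
`∑_{i ≤ n} dist(g_i, Y)² ≥ (γ σ_n)²`. Together these give `σ_n ≤ (1 + γ⁻¹)^(n + 1) d_n`.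
-/

open InnerProductSpace Metric Module Bornology

lemma mul_sum_range_le_of_le_add_mul_sum {R : Type*} [CommRing R] [PartialOrder R]
    [IsOrderedRing R] {u : ℕ → R} {r c : R} (hc : 0 ≤ c)
    (hu : ∀ n, u n ≤ r + c * ∑ i ∈ Finset.range n, u i) (n : ℕ) :
    c * ∑ i ∈ Finset.range n, u i ≤ r * ((1 + c) ^ n - 1) := by
  induction n with
  | zero => simp
  | succ n ih =>
    have hc' : 0 ≤ 1 + c := add_nonneg zero_le_one hc
    rw [Finset.sum_range_succ]
    set S := ∑ i ∈ Finset.range n, u i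
    calc c * (S + u n) ≤ c * (S + (r + c * S)) := by gcongr; exact hu n
      _ = c * r + (1 + c) * (c * S) := by ring
      _ ≤ c * r + (1 + c) * (r * ((1 + c) ^ n - 1)) := by gcongr
      _ = r * ((1 + c) ^ (n + 1) - 1) := by ring

section Deviation

variable {X : Type*} [PseudoMetricSpace X]

/-- The deviation `sup_{x ∈ F} dist(x, Y)` of a set `F` from a set `Y`, the worst-case error of
approximating elements of `F` by elements of `Y`. As a real supremum, it is `0` by convention when
the distances are unbounded. -/
noncomputable def deviation (F Y : Set X) : ℝ :=
  ⨆ x : F, infDist (x : X) Y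

variable {F Y Z : Set X}

lemma deviation_nonneg (F Y : Set X) : 0 ≤ deviation F Y :=
  Real.iSup_nonneg fun _ => infDist_nonneg

lemma bddAbove_range_infDist (hF : IsBounded F) (hY : Y.Nonempty) :
    BddAbove (Set.range fun x : F => infDist (x : X) Y) := by
  obtain ⟨y, hy⟩ := hY
  obtain ⟨R, hR⟩ := (isBounded_iff_subset_closedBall y).1 hF
  refine ⟨R, ?_⟩
  rintro _ ⟨x, rfl⟩
  exact (infDist_le_dist_of_mem hy).trans (hR x.2)

lemma infDist_le_deviation (hF : IsBounded F) (hY : Y.Nonempty) {x : X} (hx : x ∈ F) :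
    infDist x Y ≤ deviation F Y :=
  le_ciSup (bddAbove_range_infDist hF hY) ⟨x, hx⟩

lemma deviation_anti_right (hF : IsBounded F) (hY : Y.Nonempty) (hYZ : Y ⊆ Z) :
    deviation F Z ≤ deviation F Y :=
  ciSup_mono (bddAbove_range_infDist hF hY) fun _ => infDist_le_infDist_of_subset hYZ hY

end Deviation

lemma norm_mkQ_eq_infDist {R E : Type*} [Ring R] [SeminormedAddCommGroup E] [Module R E]
    (Y : Submodule R E) (x : E) : ‖Y.mkQ x‖ = infDist x (Y : Set E) :=
  QuotientAddGroup.norm_mk x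

lemma infDist_smul_eq_norm_mul {𝕜 E : Type*} [NormedField 𝕜] [SeminormedAddCommGroup E]
    [NormedSpace 𝕜 E] (Y : Submodule 𝕜 E) (c : 𝕜) (x : E) :
    infDist (c • x) (Y : Set E) = ‖c‖ * infDist x (Y : Set E) := by
  rw [← norm_mkQ_eq_infDist, ← norm_mkQ_eq_infDist, map_smul, norm_smul]

section InnerProduct

variable {𝕜 E ι : Type*} [RCLike 𝕜] [NormedAddCommGroup E] [InnerProductSpace 𝕜 E]

lemma norm_starProjection_orthogonal_eq_infDist (Y : Submodule 𝕜 E) [Y.HasOrthogonalProjection]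
    (x : E) : ‖Yᗮ.starProjection x‖ = infDist x (Y : Set E) := by
  simp only [Submodule.starProjection_orthogonal_val, Submodule.starProjection_minimal,
    infDist_eq_iInf, dist_eq_norm]
  rfl

lemma norm_inner_le_norm_mul_infDist {V : Submodule 𝕜 E} {v : E} (hv : v ∈ Vᗮ) (x : E) :
    ‖⟪v, x⟫_𝕜‖ ≤ ‖v‖ * infDist x (V : Set E) := by
  rw [infDist_eq_iInf, Real.mul_iInf_of_nonneg (norm_nonneg v)]
  refine le_ciInf fun y => ?_
  have inner_sub : ⟪v, x - y⟫_𝕜 = ⟪v, x⟫_𝕜 := by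
    rw [inner_sub_right, (Submodule.mem_orthogonal' V v).1 hv y y.2, sub_zero]
  rw [← inner_sub, dist_eq_norm]
  exact norm_inner_le_norm v (x - y)

section Orthogonal

variable [Fintype ι] (Y : Submodule 𝕜 E) [FiniteDimensional 𝕜 Y]

lemma sum_norm_starProjection_sq_le_finrank {e : ι → E} (he : Orthonormal 𝕜 e) :
    ∑ i, ‖Y.starProjection (e i)‖ ^ 2 ≤ finrank 𝕜 Y := by
  let b := stdOrthonormalBasis 𝕜 Y
  have parseval (i : ι) : ‖Y.starProjection (e i)‖ ^ 2 = ∑ k, ‖⟪e i, (b k : E)⟫_𝕜‖ ^ 2 := by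
    rw [Submodule.starProjection_apply, ← Submodule.coe_norm, ← b.sum_sq_norm_inner_left]
    simp
  have bessel (k : Fin (finrank 𝕜 Y)) : ∑ i, ‖⟪e i, (b k : E)⟫_𝕜‖ ^ 2 ≤ 1 := by
    have norm_b : ‖(b k : E)‖ = 1 := b.orthonormal.1 k
    simpa [norm_b] using he.sum_inner_products_le (b k : E) (s := Finset.univ)
  calc ∑ i, ‖Y.starProjection (e i)‖ ^ 2 = ∑ k, ∑ i, ‖⟪e i, (b k : E)⟫_𝕜‖ ^ 2 := by
        simp only [parseval]; exact Finset.sum_comm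
    _ ≤ ∑ _k : Fin (finrank 𝕜 Y), (1 : ℝ) := Finset.sum_le_sum fun k _ => bessel k
    _ = finrank 𝕜 Y := by simp

lemma card_sub_finrank_le_sum_infDist_sq {e : ι → E} (he : Orthonormal 𝕜 e) :
    (Fintype.card ι - finrank 𝕜 Y : ℝ) ≤ ∑ i, infDist (e i) (Y : Set E) ^ 2 := by
  have pythagoras (i : ι) :
      infDist (e i) (Y : Set E) ^ 2 = 1 - ‖Y.starProjection (e i)‖ ^ 2 := by
    have := Y.norm_sq_eq_add_norm_sq_starProjection (e i)
    rw [he.1 i, norm_starProjection_orthogonal_eq_infDist] at this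
    linarith
  have sum_le := sum_norm_starProjection_sq_le_finrank Y he
  simp only [pythagoras, Finset.sum_sub_distrib, Finset.sum_const, Finset.card_univ, nsmul_eq_mul,
    mul_one]
  linarith

lemma sq_mul_card_sub_finrank_le_sum_infDist_sq {v : ι → E}
    (hv : Pairwise fun i j => ⟪v i, v j⟫_𝕜 = 0) {s : ℝ} (hs : 0 ≤ s) (hsv : ∀ i, s ≤ ‖v i‖) :
    s ^ 2 * (Fintype.card ι - finrank 𝕜 Y) ≤ ∑ i, infDist (v i) (Y : Set E) ^ 2 := by
  rcases hs.eq_or_lt with rfl | hs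
  · simpa using Finset.sum_nonneg fun i _ => sq_nonneg (infDist (v i) (Y : Set E))
  have v_ne_zero (i : ι) : v i ≠ 0 := norm_pos_iff.1 (hs.trans_le (hsv i))
  let e (i : ι) : E := (‖v i‖⁻¹ : 𝕜) • v i
  have he : Orthonormal 𝕜 e := by
    refine ⟨fun i => norm_smul_inv_norm (v_ne_zero i), fun i j hij => ?_⟩
    simp only [e, inner_smul_left, inner_smul_right, hv hij, mul_zero]
  have infDist_v (i : ι) : infDist (v i) (Y : Set E) = ‖v i‖ * infDist (e i) (Y : Set E) := by
    rw [infDist_smul_eq_norm_mul, norm_inv, RCLike.norm_ofReal, abs_norm,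
      mul_inv_cancel_left₀ (norm_ne_zero_iff.2 (v_ne_zero i))]
  calc s ^ 2 * (Fintype.card ι - finrank 𝕜 Y)
      ≤ s ^ 2 * ∑ i, infDist (e i) (Y : Set E) ^ 2 := by
        gcongr; exact card_sub_finrank_le_sum_infDist_sq Y he
    _ = ∑ i, (s * infDist (e i) (Y : Set E)) ^ 2 := by simp only [Finset.mul_sum, mul_pow]
    _ ≤ ∑ i, (‖v i‖ * infDist (e i) (Y : Set E)) ^ 2 := by
        gcongr with i
        · exact mul_nonneg hs.le infDist_nonneg
        · exact infDist_nonneg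
        · exact hsv i
    _ = ∑ i, infDist (v i) (Y : Set E) ^ 2 := by simp only [infDist_v]

lemma le_sum_infDist_of_finrank_lt_card {v : ι → E} (hv : Pairwise fun i j => ⟪v i, v j⟫_𝕜 = 0)
    (hY : finrank 𝕜 Y < Fintype.card ι) {s : ℝ} (hs : 0 ≤ s) (hsv : ∀ i, s ≤ ‖v i‖) :
    s ≤ ∑ i, infDist (v i) (Y : Set E) := by
  have one_le : (1 : ℝ) ≤ Fintype.card ι - finrank 𝕜 Y := by
    rw [le_sub_iff_add_le']
    exact_mod_cast hY
  refine le_of_sq_le_sq ?_ (Finset.sum_nonneg fun _ _ => infDist_nonneg)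
  calc s ^ 2 ≤ s ^ 2 * (Fintype.card ι - finrank 𝕜 Y) :=
        le_mul_of_one_le_right (sq_nonneg s) one_le
    _ ≤ ∑ i, infDist (v i) (Y : Set E) ^ 2 :=
        sq_mul_card_sub_finrank_le_sum_infDist_sq Y hv hs hsv
    _ ≤ (∑ i, infDist (v i) (Y : Set E)) ^ 2 :=
        Finset.sum_sq_le_sq_sum_of_nonneg fun _ _ => infDist_nonneg

end Orthogonal

section GramSchmidt

variable (𝕜) [LinearOrder ι] [LocallyFiniteOrderBot ι] [WellFoundedLT ι] (f : ι → E) (i : ι)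

lemma gramSchmidt_mem_orthogonal_span :
    gramSchmidt 𝕜 f i ∈ (Submodule.span 𝕜 (f '' Set.Iio i))ᗮ := by
  refine Submodule.isOrtho_span.2 ?_ (Submodule.mem_span_singleton_self (gramSchmidt 𝕜 f i))
  rintro _ rfl _ ⟨j, hj, rfl⟩
  exact gramSchmidt_inv_triangular 𝕜 f hj

lemma sub_gramSchmidt_mem_span : f i - gramSchmidt 𝕜 f i ∈ Submodule.span 𝕜 (f '' Set.Iio i) := by
  rw [← span_gramSchmidt_Iio, gramSchmidt_def, sub_sub_cancel]
  refine Submodule.sum_mem _ fun j hj => ?_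
  rw [Submodule.starProjection_singleton]
  exact Submodule.smul_mem _ _ (Submodule.subset_span ⟨j, Finset.mem_Iio.1 hj, rfl⟩)

lemma infDist_span_le_norm_gramSchmidt :
    infDist (f i) (Submodule.span 𝕜 (f '' Set.Iio i) : Set E) ≤ ‖gramSchmidt 𝕜 f i‖ :=
  calc infDist (f i) (Submodule.span 𝕜 (f '' Set.Iio i) : Set E)
      ≤ dist (f i) (f i - gramSchmidt 𝕜 f i) :=
        infDist_le_dist_of_mem (sub_gramSchmidt_mem_span 𝕜 f i)
    _ = ‖gramSchmidt 𝕜 f i‖ := dist_self_sub_right _ _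

lemma infDist_gramSchmidt_le (Y : Submodule 𝕜 E) :
    infDist (gramSchmidt 𝕜 f i) (Y : Set E) ≤ infDist (f i) (Y : Set E) +
      ∑ j ∈ Finset.Iio i, ‖⟪gramSchmidt 𝕜 f j, f i⟫_𝕜‖ / ‖gramSchmidt 𝕜 f j‖ ^ 2 *
        infDist (gramSchmidt 𝕜 f j) (Y : Set E) := by
  have expansion := eq_sub_of_add_eq (gramSchmidt_def'' 𝕜 f i).symm
  simp only [← norm_mkQ_eq_infDist]
  rw [congrArg Y.mkQ expansion, map_sub, map_sum]
  refine (norm_sub_le _ _).trans ?_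
  gcongr
  refine norm_sum_le_of_le _ fun j _ => ?_
  rw [map_smul, norm_smul]
  simp

end GramSchmidt

end InnerProduct

section WeakGreedy

variable {H : Type*} [NormedAddCommGroup H] [InnerProductSpace ℝ H] {F : Set H}

lemma le_kolmogorovWidth {a : ℝ} {n : ℕ}
    (h : ∀ Y : Submodule ℝ H, FiniteDimensional ℝ Y → finrank ℝ Y ≤ n → a ≤ deviation F Y) :
    a ≤ kolmogorovWidth F n := by
  refine le_csInf ⟨_, ⊥, inferInstance, by simp, rfl⟩ ?_
  rintro _ ⟨Y, hY_fin, hY, rfl⟩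
  exact h Y hY_fin hY

lemma infDist_le_greedyError (hF : IsBounded F) (f : ℕ → H) (n : ℕ) {g : H} (hg : g ∈ F) :
    infDist g (greedySpace f n : Set H) ≤ greedyError F f n :=
  infDist_le_deviation hF (greedySpace f n).nonempty hg

lemma greedyError_antitone (hF : IsBounded F) (f : ℕ → H) : Antitone (greedyError F f) :=
  fun i _ hin => deviation_anti_right hF (greedySpace f i).nonempty <|
    Submodule.span_mono (Set.image_mono (Set.Iio_subset_Iio hin))

/-- A weak greedy sequence for `F` with parameter `γ`: each element `f n` of `F` realises, up to
the factor `γ`, the worst-case error of approximating `F` from the span of its predecessors. -/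
structure IsWeakGreedy (F : Set H) (γ : ℝ) (f : ℕ → H) : Prop where
  mem (n : ℕ) : f n ∈ F
  mul_greedyError_le (n : ℕ) : γ * greedyError F f n ≤ infDist (f n) (greedySpace f n : Set H)

namespace IsWeakGreedy

variable {γ : ℝ} {f : ℕ → H}

lemma mul_greedyError_le_norm_gramSchmidt (h : IsWeakGreedy F γ f) (n : ℕ) :
    γ * greedyError F f n ≤ ‖gramSchmidt ℝ f n‖ :=
  (h.mul_greedyError_le n).trans (infDist_span_le_norm_gramSchmidt ℝ f n)

lemma norm_inner_gramSchmidt_div_le (h : IsWeakGreedy F γ f) (hF : IsBounded F) (hγ : 0 < γ)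
    (j : ℕ) {g : H} (hg : g ∈ F) :
    ‖⟪gramSchmidt ℝ f j, g⟫_ℝ‖ / ‖gramSchmidt ℝ f j‖ ^ 2 ≤ γ⁻¹ := by
  refine div_le_of_le_mul₀ (sq_nonneg _) (inv_nonneg.2 hγ.le) ?_
  calc ‖⟪gramSchmidt ℝ f j, g⟫_ℝ‖
      ≤ ‖gramSchmidt ℝ f j‖ * infDist g (greedySpace f j : Set H) :=
        norm_inner_le_norm_mul_infDist (gramSchmidt_mem_orthogonal_span ℝ f j) g
    _ ≤ ‖gramSchmidt ℝ f j‖ * (γ⁻¹ * ‖gramSchmidt ℝ f j‖) := by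
        gcongr
        exact (infDist_le_greedyError hF f j hg).trans <|
          (le_inv_mul_iff₀ hγ).2 (h.mul_greedyError_le_norm_gramSchmidt j)
    _ = γ⁻¹ * ‖gramSchmidt ℝ f j‖ ^ 2 := by ring

lemma infDist_gramSchmidt_le_add_mul_sum (h : IsWeakGreedy F γ f) (hF : IsBounded F) (hγ : 0 < γ)
    (Y : Submodule ℝ H) (n : ℕ) :
    infDist (gramSchmidt ℝ f n) (Y : Set H) ≤
      deviation F Y + γ⁻¹ * ∑ j ∈ Finset.range n, infDist (gramSchmidt ℝ f j) (Y : Set H) := by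
  refine (infDist_gramSchmidt_le ℝ f n Y).trans ?_
  rw [Nat.Iio_eq_range, Finset.mul_sum]
  gcongr with j
  · exact infDist_le_deviation hF Y.nonempty (h.mem n)
  · exact infDist_nonneg
  · exact h.norm_inner_gramSchmidt_div_le hF hγ j (h.mem n)

lemma mul_greedyError_le_sum_infDist_gramSchmidt (h : IsWeakGreedy F γ f) (hF : IsBounded F)
    (hγ : 0 ≤ γ) {n : ℕ} (Y : Submodule ℝ H) [FiniteDimensional ℝ Y] (hY : finrank ℝ Y ≤ n) :
    γ * greedyError F f n ≤
      ∑ i ∈ Finset.range (n + 1), infDist (gramSchmidt ℝ f i) (Y : Set H) := by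
  rw [Finset.sum_range]
  refine le_sum_infDist_of_finrank_lt_card Y ?_ (by simpa using Nat.lt_succ_of_le hY)
    (mul_nonneg hγ (deviation_nonneg F _)) fun i => ?_
  · exact (gramSchmidt_pairwise_orthogonal ℝ f).comp_of_injective Fin.val_injective
  · exact (mul_le_mul_of_nonneg_left (greedyError_antitone hF f i.is_le) hγ).trans
      (h.mul_greedyError_le_norm_gramSchmidt i)

theorem greedyError_le_mul_deviation (h : IsWeakGreedy F γ f) (hF : IsBounded F) (hγ : 0 < γ)
    {n : ℕ} (Y : Submodule ℝ H) [FiniteDimensional ℝ Y] (hY : finrank ℝ Y ≤ n) :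
    greedyError F f n ≤ (1 + γ⁻¹) ^ (n + 1) * deviation F Y :=
  calc greedyError F f n
      ≤ γ⁻¹ * ∑ i ∈ Finset.range (n + 1), infDist (gramSchmidt ℝ f i) (Y : Set H) :=
        (le_inv_mul_iff₀ hγ).2 (h.mul_greedyError_le_sum_infDist_gramSchmidt hF hγ.le Y hY)
    _ ≤ deviation F Y * ((1 + γ⁻¹) ^ (n + 1) - 1) :=
        mul_sum_range_le_of_le_add_mul_sum (inv_nonneg.2 hγ.le)
          (h.infDist_gramSchmidt_le_add_mul_sum hF hγ Y) (n + 1)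
    _ ≤ (1 + γ⁻¹) ^ (n + 1) * deviation F Y := by linarith [deviation_nonneg F Y]

theorem greedyError_le_mul_kolmogorovWidth (h : IsWeakGreedy F γ f) (hF : IsBounded F)
    (hγ : 0 < γ) (n : ℕ) :
    greedyError F f n ≤ (1 + γ⁻¹) ^ (n + 1) * kolmogorovWidth F n := by
  rw [← div_le_iff₀' (by positivity)]
  refine le_kolmogorovWidth fun Y _ hY => ?_
  rw [div_le_iff₀' (by positivity)]
  exact h.greedyError_le_mul_deviation hF hγ Y hY

end IsWeakGreedy

theorem stmt_7_general {γ : ℝ} {f : ℕ → H} (h : IsWeakGreedy F γ f) (hF : IsBounded F)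
    (hγ : 0 < γ) {C₀ γhat : ℝ}
    (hdecay : ∀ n : ℕ, kolmogorovWidth F n ≤ C₀ * Real.exp (-γhat * n)) (n : ℕ) :
    greedyError F f n ≤
      (1 + γ⁻¹) * C₀ * Real.exp (-(γhat - Real.log (1 + γ⁻¹)) * n) := by
  have hq : 0 < 1 + γ⁻¹ := by positivity
  have exp_rate : Real.exp (-(γhat - Real.log (1 + γ⁻¹)) * n) =
      (1 + γ⁻¹) ^ n * Real.exp (-γhat * n) := by
    rw [← Real.exp_log (pow_pos hq n), Real.log_pow, ← Real.exp_add]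
    ring_nf
  calc greedyError F f n ≤ (1 + γ⁻¹) ^ (n + 1) * (C₀ * Real.exp (-γhat * n)) := by
        refine (h.greedyError_le_mul_kolmogorovWidth hF hγ n).trans ?_
        gcongr
        exact hdecay n
    _ = (1 + γ⁻¹) * C₀ * Real.exp (-(γhat - Real.log (1 + γ⁻¹)) * n) := by
        rw [exp_rate]; ring

end WeakGreedy

/-- If the Kolmogorov widths decay exponentially with rate exceeding `log(1 + γ⁻¹)`,
then the weak greedy spaces achieve exponential accuracy. -/
theorem stmt_7
    {H : Type*} [NormedAddCommGroup H] [InnerProductSpace ℝ H] [CompleteSpace H]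
    (F : Set H) (hFcompact : IsCompact F) (hFne : F.Nonempty)
    (f : ℕ → H) (hfF : ∀ m, f m ∈ F)
    (γ : ℝ) (hγ0 : 0 < γ) (hγ1 : γ ≤ 1)
    (hgreedy : ∀ n, γ * greedyError F f n ≤ Metric.infDist (f n) (greedySpace f n : Set H))
    (C₀ : ℝ) (hC₀ : 0 < C₀)
    (γhat : ℝ) (hγhat : Real.log (1 + γ⁻¹) < γhat)
    (hdecay : ∀ n : ℕ, kolmogorovWidth F n ≤ C₀ * Real.exp (-γhat * n)) :
    ∃ ζ > (0 : ℝ), ∃ C > (0 : ℝ),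
      (∀ n : ℕ, greedyError F f n ≤ C * C₀ * Real.exp (-ζ * n)) ∧
      ∀ n : ℕ, ∀ g ∈ F,
        Metric.infDist g (greedySpace f n : Set H) ≤ C * C₀ * Real.exp (-ζ * n) := by
  have hbound := stmt_7_general ⟨hfF, hgreedy⟩ hFcompact.isBounded hγ0 hdecay
  exact ⟨γhat - Real.log (1 + γ⁻¹), sub_pos.2 hγhat, 1 + γ⁻¹, by positivity, hbound,
    fun n _ hg => (infDist_le_greedyError hFcompact.isBounded f n hg).trans (hbound n)⟩
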